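/- For each d ≥ 11, every recurrent balanced sequence 𝐯 over an alphabet of d letters contains a nonempty factor z with exp(z) ≥ (d−1)/(d−2). In particular, E(𝐯) ≥ (d−1)/(d−2), and if E(𝐯) = (d−1)/(d−2), then this supremum is attained by some factor of 𝐯. -/

import Mathlib

open Filter
open scoped ENNReal

namespace BalancedCE

variable {α : Type*} {β : Type*}

/-- The factor of `v` of length `n` starting at position `i`. -/
def factorAt (v : ℕ → α) (i n : ℕ) : List α := (List.range n).map fun k => v (i + k)

/-- `u` is a factor of the sequence `v`. -/
def IsFactor (v : ℕ → α) (u : List α) : Prop := ∃ i, factorAt v i u.length = u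

/-- The word `w` occurs in the sequence `v` at position `i`. -/
def OccursAt (v : ℕ → α) (w : List α) (i : ℕ) : Prop := factorAt v i w.length = w

/-- A sequence is balanced if counts of each letter in equal-length factors differ by at most 1. -/
def Balanced [DecidableEq α] (v : ℕ → α) : Prop :=
  ∀ (a : α) (u w : List α), IsFactor v u → IsFactor v w → u.length = w.length →
    |(u.count a : ℤ) - (w.count a : ℤ)| ≤ 1

def EventuallyPeriodic (v : ℕ → α) : Prop :=
  ∃ p, 0 < p ∧ ∃ N, ∀ n, N ≤ n → v (n + p) = v n

def Recurrent (v : ℕ → α) : Prop :=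
  ∀ u : List α, IsFactor v u → ∀ N : ℕ, ∃ i, N ≤ i ∧ OccursAt v u i

/-- `i < j` are consecutive occurrences of the letter `a` in `v`. -/
def ConsecOcc (v : ℕ → α) (a : α) (i j : ℕ) : Prop :=
  i < j ∧ v i = a ∧ v j = a ∧ ∀ k, i < k → k < j → v k ≠ a

/-- `p` is a period of the finite word `z` (i.e. `z` is a prefix of `u^ω` with `|u| = p`). -/
def IsPeriod (z : List α) (p : ℕ) : Prop :=
  0 < p ∧ ∀ i, i + p < z.length → z[i]? = z[i + p]?

/-- The minimal period of a finite word. -/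
noncomputable def minPeriod (z : List α) : ℕ := sInf {p | IsPeriod z p}

/-- The exponent of a finite word: its length divided by its minimal period. -/
noncomputable def expE (z : List α) : ℝ≥0∞ := (z.length : ℝ≥0∞) / (minPeriod z : ℝ≥0∞)

/-- The critical exponent of a sequence: the supremum of exponents of nonempty factors. -/
noncomputable def criticalExponent (v : ℕ → α) : ℝ≥0∞ :=
  ⨆ (z : List α) (_ : IsFactor v z ∧ z ≠ []), expE z

/-- A Pansiot sequence over a `d`-letter alphabet. -/
def Pansiot (d : ℕ) (v : ℕ → α) : Prop :=
  (∀ i : ℕ, (factorAt v i (d - 1)).Nodup) ∧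
  ∀ (a : α) (i j : ℕ), ConsecOcc v a i j → v (i + 1) ≠ v (j + 1)

/-- The letter `a` has frequency `ρ` in the sequence `v`. -/
def HasFreq [DecidableEq α] (v : ℕ → α) (a : α) (ρ : ℝ) : Prop :=
  Tendsto (fun n => ((factorAt v 0 n).count a : ℝ) / n) atTop (nhds ρ)

/-- Factor complexity of a sequence. -/
noncomputable def complexity (v : ℕ → α) (n : ℕ) : ℕ :=
  Set.ncard {u : List α | IsFactor v u ∧ u.length = n}

/-- Sturmian sequences: aperiodic binary sequences of factor complexity `n + 1`.
Convention: the letter `a` is `false`, the letter `b` is `true`. -/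
def Sturmian (u : ℕ → Bool) : Prop :=
  ¬ EventuallyPeriodic u ∧ ∀ n, complexity u n = n + 1

/-- Prepending a letter to a sequence. -/
def consSeq (c : α) (v : ℕ → α) : ℕ → α := fun n =>
  match n with
  | 0 => c
  | Nat.succ m => v m

/-- A standard sequence: a Sturmian sequence `u` such that `a·u` and `b·u` are Sturmian. -/
def IsStandard (u : ℕ → Bool) : Prop :=
  Sturmian u ∧ Sturmian (consSeq false u) ∧ Sturmian (consSeq true u)

/-- The slope of a binary sequence, with the convention `ρ_b > ρ_a` (`a = false`, `b = true`). -/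
def HasSlope (u : ℕ → Bool) (θ : ℝ) : Prop :=
  ∃ ρa ρb : ℝ, HasFreq u false ρa ∧ HasFreq u true ρb ∧ ρa < ρb ∧ θ = ρa / ρb

/-- `θ` has the (infinite) continued fraction expansion `[0; a 1, a 2, a 3, …]`:
there are complete quotients' fractional parts `t n ∈ (0,1)` with `t 0 = θ` and
`1 / t n = a (n+1) + t (n+1)` for all `n`. (The value `a 0` is irrelevant.) -/
def HasCF (θ : ℝ) (a : ℕ → ℕ) : Prop :=
  ∃ t : ℕ → ℝ, t 0 = θ ∧ ∀ n, 0 < t n ∧ t n < 1 ∧ 1 / t n = (a (n + 1) : ℝ) + t (n + 1)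

/-- Number of positions `< n` where `u` takes the value `c`. -/
def countBefore (u : ℕ → Bool) (c : Bool) (n : ℕ) : ℕ :=
  ((List.range n).filter fun i => u i = c).length

/-- The colouring of a binary sequence `u` by `y` (on the `a = false` positions)
and `y'` (on the `b = true` positions). -/
def colour (u : ℕ → Bool) (y : ℕ → α) (y' : ℕ → β) : ℕ → α ⊕ β := fun n =>
  if u n = false then Sum.inl (y (countBefore u false n))
  else Sum.inr (y' (countBefore u true n))

/-- A constant gap sequence: periodic, and consecutive occurrences of each occurring
letter are at a constant distance. -/
def ConstantGap (y : ℕ → α) : Prop :=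
  (∃ p, 0 < p ∧ ∀ n, y (n + p) = y n) ∧
  ∀ c : α, (∃ i, y i = c) → ∃ g, 0 < g ∧ ∀ i j, ConsecOcc y c i j → j - i = g

/-- The discolouration (projection) map: letters of the first alphabet go to `a = false`,
letters of the second alphabet go to `b = true`. -/
def proj : α ⊕ β → Bool := Sum.elim (fun _ => false) (fun _ => true)

/-- `v` is a return word to `w` in the sequence `z`. -/
def IsReturnWord (z : ℕ → α) (w v : List α) : Prop :=
  ∃ i j : ℕ, i < j ∧ OccursAt z w i ∧ OccursAt z w j ∧
    (∀ k, i < k → k < j → ¬ OccursAt z w k) ∧ v = factorAt z i (j - i)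

def RightSpecial (z : ℕ → α) (w : List α) : Prop :=
  ∃ a b : α, a ≠ b ∧ IsFactor z (w ++ [a]) ∧ IsFactor z (w ++ [b])

def LeftSpecial (z : ℕ → α) (w : List α) : Prop :=
  ∃ a b : α, a ≠ b ∧ IsFactor z (a :: w) ∧ IsFactor z (b :: w)

def Bispecial (z : ℕ → α) (w : List α) : Prop := LeftSpecial z w ∧ RightSpecial z w

/-- `o` enumerates, in increasing order, all occurrences of `w` in `z`. -/
def IsOccEnum (z : ℕ → α) (w : List α) (o : ℕ → ℕ) : Prop :=
  StrictMono o ∧ (∀ n, OccursAt z w (o n)) ∧ ∀ i, OccursAt z w i → ∃ n, o n = i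

/-- The derived sequence of `z` with respect to the occurrence enumeration `o` of a factor:
its `n`-th letter is the return word between the `n`-th and `(n+1)`-st occurrences. -/
def derivedSeq (z : ℕ → α) (o : ℕ → ℕ) : ℕ → List α :=
  fun n => factorAt z (o n) (o (n + 1) - o n)

/-- The slope of a sequence over a two-letter alphabet:
the ratio of the smaller letter frequency to the larger one. -/
def HasSlope2 {γ : Type*} [DecidableEq γ] (z : ℕ → γ) (θ : ℝ) : Prop :=
  ∃ (c c' : γ) (ρ ρ' : ℝ), c ≠ c' ∧ (∀ n, z n = c ∨ z n = c') ∧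
    HasFreq z c ρ ∧ HasFreq z c' ρ' ∧ ρ < ρ' ∧ θ = ρ / ρ'

/-- The purely cyclic constant gap sequence `(0 1 ⋯ (δ-1))^ω` over `ZMod δ`. -/
def cyc (δ : ℕ) : ℕ → ZMod δ := fun n => (n : ZMod δ)

/-- The colouring `colour(u, (1 2 ⋯ δ)^ω, (1' 2' ⋯ δ')^ω)` over `2δ` letters. -/
def colourCyc (δ : ℕ) (u : ℕ → Bool) : ℕ → ZMod δ ⊕ ZMod δ := colour u (cyc δ) (cyc δ)

/-!
Suppose that every exponent is below `k / (k - 1)`, where `k = d - 1`. Then `v` is a Pansiot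
sequence: every gap between consecutive occurrences of a letter is `k`, `k + 1` or `k + 2`, and
`v` can be reconstructed from one window of length `k` together with the positions of the gaps `k`.
By balance no letter has both a gap `k` and a gap `k + 2`; call a letter short if it has a gap `k`,
and let `u` be the binary sequence marking the short letters. A gap `k` starts exactly where `u`
ascends from `0` to `1`, and `u` shifted by `d` is `u` with every ascent `01` swapped to `10`.
Under this traffic rule the blocks `11` drift to the right and the blocks `00` to the left; since
two such blocks can neither cross nor meet, either `11` never occurs or `00` eventually stops
occurring. In both cases `u` is eventually periodic, hence so is `v`, which therefore contains
arbitrarily high powers.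
-/

section Factors

variable {v : ℕ → α} {z : List α} {i n p m : ℕ}

theorem length_factorAt (v : ℕ → α) (i n : ℕ) : (factorAt v i n).length = n := by
  simp [factorAt]

theorem isFactor_factorAt (v : ℕ → α) (i n : ℕ) : IsFactor v (factorAt v i n) :=
  ⟨i, by rw [length_factorAt]⟩

theorem getElem_factorAt {j : ℕ} (hj : j < (factorAt v i n).length) :
    (factorAt v i n)[j] = v (i + j) := by
  simp [factorAt]

theorem mem_factorAt {a : α} : a ∈ factorAt v i n ↔ ∃ j < n, v (i + j) = a := by
  simp [factorAt]

theorem isPeriod_factorAt (hp : 0 < p) (h : ∀ j < m, v (i + j) = v (i + j + p)) :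
    IsPeriod (factorAt v i (m + p)) p := by
  refine ⟨hp, fun j hj => ?_⟩
  rw [List.getElem?_eq_getElem hj, List.getElem?_eq_getElem (by omega), getElem_factorAt,
    getElem_factorAt, ← add_assoc, h j (by rw [length_factorAt] at hj; omega)]

theorem div_le_expE (h : IsPeriod z p) : (z.length : ℝ≥0∞) / p ≤ expE z :=
  ENNReal.div_le_div_left (Nat.cast_le.2 (Nat.sInf_le h)) _

theorem expE_le_criticalExponent (hz : IsFactor v z) (hne : z ≠ []) :
    expE z ≤ criticalExponent v :=
  le_iSup₂ (f := fun (z : List α) (_ : IsFactor v z ∧ z ≠ []) => expE z) z ⟨hz, hne⟩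

end Factors

theorem EventuallyPeriodic.exists_periodic {v : ℕ → α} (hv : EventuallyPeriodic v) :
    ∃ p, 0 < p ∧ ∃ N, Function.Periodic (fun n => v (N + n)) p := by
  obtain ⟨p, hp, N, h⟩ := hv
  exact ⟨p, hp, N, fun n => by simpa only [add_assoc] using h (N + n) (Nat.le_add_right N n)⟩

theorem EventuallyPeriodic.of_determined [Finite α] {v : ℕ → α} {w : ℕ → β} {k : ℕ}
    (hw : EventuallyPeriodic w)
    (h : ∀ m n, w m = w n → (∀ j < k, v (m + j) = v (n + j)) → v (m + k) = v (n + k)) :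
    EventuallyPeriodic v := by
  obtain ⟨p, hp, N, hper⟩ := hw.exists_periodic
  obtain ⟨s, t, hst, hwindow⟩ : ∃ s t, s < t ∧
      ∀ j < k, v (N + s * p + j) = v (N + t * p + j) := by
    obtain ⟨s, t, hne, heq⟩ := Finite.exists_ne_map_eq_of_infinite
      fun (s : ℕ) (j : Fin k) => v (N + s * p + j)
    have hwindow : ∀ j < k, v (N + s * p + j) = v (N + t * p + j) :=
      fun j hj => congrFun heq ⟨j, hj⟩
    rcases hne.lt_or_gt with hlt | hlt
    · exact ⟨s, t, hlt, hwindow⟩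
    · exact ⟨t, s, hlt, fun j hj => (hwindow j hj).symm⟩
  have hdriver (s l : ℕ) : w (N + s * p + l) = w (N + l) := by
    rw [add_assoc, add_comm (s * p)]
    exact hper.nat_mul s l
  have htail (j : ℕ) : v (N + s * p + j) = v (N + t * p + j) := by
    induction j using Nat.strong_induction_on with
    | _ j ih =>
      obtain hj | ⟨l, rfl⟩ : j < k ∨ ∃ l, j = l + k := by
        rcases lt_or_ge j k with hj | hj
        · exact .inl hj
        · exact .inr (Nat.exists_eq_add_of_le' hj)
      · exact hwindow j hj
      · rw [← add_assoc, ← add_assoc]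
        refine h _ _ ((hdriver s l).trans (hdriver t l).symm) fun j hj => ?_
        rw [add_assoc _ l, add_assoc _ l]
        exact ih (l + j) (by omega)
  have hlt : s * p < t * p := Nat.mul_lt_mul_of_pos_right hst hp
  refine ⟨t * p - s * p, by omega, N + s * p, fun n hn => ?_⟩
  obtain ⟨j, rfl⟩ := Nat.exists_eq_add_of_le hn
  rw [htail j]
  congr 1
  omega

section DistinctWindows

/-- Any `k` consecutive letters of `v` are pairwise distinct; this is the first condition in
`Pansiot (k + 1) v`, written with positions instead of factors. -/
def DistinctWindows (k : ℕ) (v : ℕ → α) : Prop :=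
  ∀ ⦃i j⦄, i < j → j < i + k → v i ≠ v j

/-- The letter at position `n` returns after `k` steps, the least gap allowed by
`DistinctWindows k v`. The sequence `ShortReturn k v` is the Pansiot code of `v`. -/
def ShortReturn (k : ℕ) (v : ℕ → α) (n : ℕ) : Prop :=
  v (n + k) = v n

variable {v : ℕ → α} {k n : ℕ}

theorem distinctWindows_iff_nodup :
    DistinctWindows k v ↔ ∀ i, (factorAt v i k).Nodup := by
  simp only [DistinctWindows, List.nodup_iff_pairwise_ne, List.pairwise_iff_getElem,
    getElem_factorAt, length_factorAt]
  refine ⟨fun h i a b _ hb hab => h (by omega) (by omega), fun h i j hij hj => ?_⟩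
  have hne := h i 0 (j - i) (by omega) (by omega) (by omega)
  rwa [add_zero, Nat.add_sub_cancel' hij.le] at hne

namespace DistinctWindows

variable (hv : DistinctWindows k v)
include hv

theorem consecOcc_of_eq {i j : ℕ} (hij : i < j) (hj : j < i + 2 * k) (heq : v j = v i) :
    ConsecOcc v (v i) i j := by
  refine ⟨hij, rfl, heq, fun l hil hlj => ?_⟩
  rcases lt_or_ge l (i + k) with hl | hl
  · exact (hv hil hl).symm
  · exact heq ▸ hv hlj (by omega)

variable [Fintype α] (hcard : Fintype.card α = k + 1)
include hcard

theorem exists_eq_of_not_shortReturn (hn : ¬ ShortReturn k v n) (a : α) :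
    ∃ j ≤ k, v (n + j) = a := by
  have hne (i j : Fin (k + 1)) (hij : i < j) : v (n + i) ≠ v (n + j) := by
    by_cases hlong : j.1 < i.1 + k
    · exact hv (by omega) (by omega)
    · have hi : i.1 = 0 := by omega
      have hj : j.1 = k := by omega
      rw [hi, hj]
      exact Ne.symm hn
  have hinj : Function.Injective fun j : Fin (k + 1) => v (n + j) :=
    .of_lt_imp_ne hne
  obtain ⟨j, hj⟩ := ((Fintype.bijective_iff_injective_and_card _).2 ⟨hinj, by simp [hcard]⟩).2 a
  exact ⟨j, Nat.lt_succ_iff.1 j.2, hj⟩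

theorem apply_add_succ (h₀ : ¬ ShortReturn k v n) (h₁ : ¬ ShortReturn k v (n + 1)) :
    v (n + 1 + k) = v n := by
  obtain ⟨j, hj, heq⟩ := hv.exists_eq_of_not_shortReturn hcard h₀ (v (n + 1 + k))
  obtain rfl | rfl | hj₂ : j = 0 ∨ j = 1 ∨ 2 ≤ j := by omega
  · exact heq.symm
  · exact absurd heq.symm h₁
  · exact absurd heq (hv (by omega) (by omega))

theorem apply_add_add_two (hk : 2 ≤ k) (h₀ : ¬ ShortReturn k v n)
    (h₁ : ShortReturn k v (n + 1)) (h₂ : ¬ ShortReturn k v (n + 2)) : v (n + 2 + k) = v n := by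
  obtain ⟨j, hj, heq⟩ := hv.exists_eq_of_not_shortReturn hcard h₀ (v (n + 2 + k))
  obtain rfl | rfl | rfl | hj₃ : j = 0 ∨ j = 1 ∨ j = 2 ∨ 3 ≤ j := by omega
  · exact heq.symm
  · exact absurd (h₁.trans heq) (hv (by omega) (by omega))
  · exact absurd heq.symm h₂
  · exact absurd heq (hv (by omega) (by omega))

theorem apply_add_eq_apply_add {m : ℕ} (hS : ShortReturn k v m = ShortReturn k v n)
    (hwindow : ∀ j < k, v (m + j) = v (n + j)) : v (m + k) = v (n + k) := by
  by_cases hm : ShortReturn k v m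
  · obtain rfl | hk := k.eq_zero_or_pos
    · have : Subsingleton α := Fintype.card_le_one_iff_subsingleton.1 hcard.le
      exact Subsingleton.elim _ _
    · exact hm.trans ((hwindow 0 hk).trans (hS.mp hm).symm)
  · obtain ⟨j, hj, heq⟩ := hv.exists_eq_of_not_shortReturn hcard (hS ▸ hm) (v (m + k))
    obtain rfl | hlt := hj.eq_or_lt
    · exact heq.symm
    · rw [← hwindow j hlt] at heq
      obtain rfl | hj₀ := j.eq_zero_or_pos
      · exact absurd heq.symm hm
      · exact absurd heq (hv (by omega) (by omega))

end DistinctWindows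

end DistinctWindows

namespace Pansiot

variable {v : ℕ → α} {k n : ℕ}

theorem distinctWindows (hv : Pansiot (k + 1) v) : DistinctWindows k v :=
  distinctWindows_iff_nodup.2 hv.1

theorem not_shortReturn_succ (hv : Pansiot (k + 1) v) (hk : 0 < k) (hn : ShortReturn k v n) :
    ¬ ShortReturn k v (n + 1) := fun hn₁ =>
  hv.2 _ n (n + k) (hv.distinctWindows.consecOcc_of_eq (by omega) (by omega) hn)
    (by rw [← hn₁, add_right_comm])

theorem shortReturn_add_two [Fintype α] (hv : Pansiot (k + 1) v)
    (hcard : Fintype.card α = k + 1) (hk : 2 ≤ k) (h₀ : ¬ ShortReturn k v n)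
    (h₁ : ¬ ShortReturn k v (n + 1)) : ShortReturn k v (n + 2) := by
  by_contra h₂
  have hd := hv.distinctWindows
  have hgap : v (n + 1 + k) = v n := hd.apply_add_succ hcard h₀ h₁
  have hgap' : v (n + 2 + k) = v (n + 1) := hd.apply_add_succ hcard h₁ h₂
  exact hv.2 _ n (n + 1 + k) (hd.consecOcc_of_eq (by omega) (by omega) hgap)
    (by rw [← hgap', show n + 2 + k = n + 1 + k + 1 by omega])

end Pansiot

section FactorExponents

/-- Every nonempty factor of `v` has exponent less than `r`. Unlike `criticalExponent v < r`, this
allows `r` to be an unattained supremum. -/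
def FactorExponentsLT (r : ℝ≥0∞) (v : ℕ → α) : Prop :=
  ∀ z, IsFactor v z → z ≠ [] → expE z < r

variable {v : ℕ → α} {k : ℕ} (hv : FactorExponentsLT (k / (k - 1 : ℕ)) v)
include hv

namespace FactorExponentsLT

theorem exists_ne {p m : ℕ} (i : ℕ) (hp : 0 < p) (hm : p + m ≤ m * k) :
    ∃ j < m, v (i + j) ≠ v (i + j + p) := by
  by_contra! hrep
  have hk : 1 < k := by
    by_contra! hk
    have : m * k ≤ m * 1 := Nat.mul_le_mul_left m hk
    omega
  obtain ⟨e, rfl⟩ := Nat.exists_eq_add_of_le' hk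
  have hratio : ((e + 2 : ℕ) : ℝ≥0∞) / (e + 1 : ℕ) ≤ (m + p : ℕ) / p := by
    rw [ENNReal.le_div_iff_mul_le (.inl (Nat.cast_ne_zero.2 hp.ne'))
      (.inl (ENNReal.natCast_ne_top p)), mul_comm, ← mul_div_assoc]
    apply ENNReal.div_le_of_le_mul
    norm_cast
    linarith
  have hlt := hv _ (isFactor_factorAt v i (m + p))
    (List.ne_nil_of_length_pos (by rw [length_factorAt]; omega))
  have hle := div_le_expE (isPeriod_factorAt hp hrep)
  rw [length_factorAt] at hle
  exact (hratio.trans hle).not_gt hlt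

theorem not_eventuallyPeriodic (hk : 2 ≤ k) : ¬ EventuallyPeriodic v := by
  rintro ⟨p, hp, N, hper⟩
  obtain ⟨j, -, hj⟩ := hv.exists_ne N hp (m := p) (by nlinarith)
  exact hj (hper (N + j) (Nat.le_add_right N j)).symm

theorem distinctWindows : DistinctWindows k v := by
  intro i j hij hj
  obtain ⟨l, hl, hne⟩ := hv.exists_ne i (p := j - i) (m := 1) (by omega) (by omega)
  obtain rfl : l = 0 := by omega
  rwa [add_zero, Nat.add_sub_cancel' hij.le] at hne

theorem apply_succ_ne {i j : ℕ} (hij : i < j) (hj : j + 2 ≤ i + 2 * k) (heq : v j = v i) :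
    v (i + 1) ≠ v (j + 1) := by
  obtain ⟨l, hl, hne⟩ := hv.exists_ne i (p := j - i) (m := 2) (by omega) (by omega)
  obtain rfl | rfl : l = 0 ∨ l = 1 := by omega
  · rw [add_zero, Nat.add_sub_cancel' hij.le] at hne
    exact absurd heq.symm hne
  · rwa [show i + 1 + (j - i) = j + 1 by omega] at hne

theorem pansiot [Fintype α] (hcard : Fintype.card α = k + 1) (hk : 3 ≤ k) :
    Pansiot (k + 1) v := by
  have hd := hv.distinctWindows
  refine ⟨distinctWindows_iff_nodup.1 hd, ?_⟩
  rintro _ i j ⟨hij, rfl, heq, hfirst⟩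
  have hgap {p : ℕ} (hp : 0 < p) (hreturn : v (i + p) = v i) : j ≤ i + p :=
    not_lt.1 fun hlt => hfirst (i + p) (by omega) hlt hreturn
  by_cases h₀ : ShortReturn k v i
  · have := hgap (by omega) h₀
    exact hv.apply_succ_ne hij (by omega) heq
  by_cases h₁ : ShortReturn k v (i + 1)
  · have h₂ : ¬ ShortReturn k v (i + 2) := fun h₂ =>
      hv.apply_succ_ne (i := i + 1) (j := i + 1 + k) (by omega) (by omega) h₁
        (by rw [← h₂, show i + 2 + k = i + 1 + k + 1 by omega])
    have := hgap (p := k + 2) (by omega)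
      (by rw [add_comm k, ← add_assoc]; exact hd.apply_add_add_two hcard (by omega) h₀ h₁ h₂)
    -- At the largest gap `k + 2`, `v (j + 1)` is only two steps past the return `i + 1 + k`.
    by_cases hj : j = i + k + 2
    · rw [← h₁]
      exact hd (by omega) (by omega)
    · exact hv.apply_succ_ne hij (by omega) heq
  · have := hgap (p := k + 1) (by omega)
      (by rw [add_comm k, ← add_assoc]; exact hd.apply_add_succ hcard h₀ h₁)
    exact hv.apply_succ_ne hij (by omega) heq

end FactorExponentsLT

end FactorExponents

section SwapsAscents

/-- The binary sequence `u` has the block `01` at position `n`. -/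
def Ascent (u : ℕ → Prop) (n : ℕ) : Prop :=
  ¬ u n ∧ u (n + 1)

/-- From position `1` on, the sequence `u` shifted by `d` is `u` with every block `01` replaced by
`10`: the traffic rule (cellular automaton 184), one time step being a shift by `d`. -/
structure SwapsAscents (d : ℕ) (u : ℕ → Prop) : Prop where
  left : ∀ {n}, Ascent u n → u (n + d)
  right : ∀ {n}, Ascent u n → ¬ u (n + 1 + d)
  rest : ∀ {n}, ¬ Ascent u n → ¬ Ascent u (n + 1) → (u (n + 1 + d) ↔ u (n + 1))

namespace SwapsAscents

variable {d : ℕ} {u : ℕ → Prop} (hu : SwapsAscents d u)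
include hu

theorem iff_of_no_zero_zero {n : ℕ} (h₀ : ¬ u n → u (n + 1)) (h₁ : ¬ u (n + 1) → u (n + 2)) :
    u (n + 1 + d) ↔ u n := by
  by_cases hn : u n
  · refine iff_of_true ?_ hn
    by_cases hn₁ : u (n + 1)
    · exact (hu.rest (fun h => h.1 hn) fun h => h.1 hn₁).2 hn₁
    · exact hu.left ⟨hn₁, h₁ hn₁⟩
  · exact iff_of_false (hu.right ⟨hn, h₀ hn⟩) hn

theorem iff_of_no_one_one {n : ℕ} (h₀ : u n → ¬ u (n + 1)) (h₁ : u (n + 1) → ¬ u (n + 2)) :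
    u (n + 1 + d) ↔ u (n + 2) := by
  by_cases hn₂ : u (n + 2)
  · exact iff_of_true (hu.left ⟨fun hn₁ => h₁ hn₁ hn₂, hn₂⟩) hn₂
  · refine iff_of_false ?_ hn₂
    by_cases hn₁ : u (n + 1)
    · exact hu.right ⟨fun hn => h₀ hn hn₁, hn₁⟩
    · exact fun h => hn₁ ((hu.rest (fun h => hn₁ h.2) fun h => hn₂ h.2).1 h)

variable (hdense : ∀ n, Ascent u n ∨ Ascent u (n + 1) ∨ Ascent u (n + 2))
include hdense

theorem one_one_shift {n : ℕ} (h₀ : u n) (h₁ : u (n + 1)) :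
    u (n + 1 + d) ∧ u (n + 2 + d) := by
  have ha₀ : ¬ Ascent u n := fun h => h.1 h₀
  have ha₁ : ¬ Ascent u (n + 1) := fun h => h.1 h₁
  have ha₂ : Ascent u (n + 2) := ((hdense n).resolve_left ha₀).resolve_left ha₁
  exact ⟨(hu.rest ha₀ ha₁).2 h₁, hu.left ha₂⟩

theorem zero_zero_shift {n : ℕ} (h₂ : ¬ u (n + 2)) (h₃ : ¬ u (n + 3)) :
    ¬ u (n + 1 + d) ∧ ¬ u (n + 2 + d) := by
  have ha₁ : ¬ Ascent u (n + 1) := fun h => h₂ h.2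
  have ha₂ : ¬ Ascent u (n + 2) := fun h => h₃ h.2
  have ha₀ : Ascent u n := (hdense n).resolve_right (not_or.2 ⟨ha₁, ha₂⟩)
  exact ⟨hu.right ha₀, fun h => h₂ ((hu.rest ha₁ ha₂).1 h)⟩

theorem not_zero_zero_after_one_one {n : ℕ} (t : ℕ) (h₀ : u n) (h₁ : u (n + 1))
    (h₂ : ¬ u (n + 1 + t)) : u (n + 2 + t) := by
  -- One time step brings the blocks `11` and `00` closer together by two positions.
  induction t using Nat.twoStepInduction generalizing n with
  | zero => exact absurd h₁ h₂
  | one =>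
    rcases hdense n with h | h | h
    · exact absurd h₀ h.1
    · exact absurd h₁ h.1
    · exact h.2
  | more t ih _ =>
    by_contra h₃
    obtain ⟨hone, hone'⟩ := hu.one_one_shift hdense h₀ h₁
    obtain ⟨hzero, hzero'⟩ := hu.zero_zero_shift hdense (n := n + 1 + t) h₂
      (by rwa [show n + 1 + t + 3 = n + 2 + (t + 2) by omega])
    apply hzero'
    rw [show n + 1 + t + 2 + d = n + 1 + d + 2 + t by omega]
    refine ih hone (by rwa [add_right_comm (n + 1)]) ?_
    rwa [show n + 1 + d + 1 + t = n + 1 + t + 1 + d by omega]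

theorem eventuallyPeriodic (hd : 2 ≤ d) : EventuallyPeriodic u := by
  by_cases hone : ∃ m, u m ∧ u (m + 1)
  · obtain ⟨m, h₀, h₁⟩ := hone
    have hzero (n : ℕ) (hn : m + 1 ≤ n) (h : ¬ u n) : u (n + 1) := by
      obtain ⟨t, rfl⟩ := Nat.exists_eq_add_of_le hn
      rw [add_right_comm]
      exact hu.not_zero_zero_after_one_one hdense t h₀ h₁ h
    refine ⟨1 + d, by omega, m + 1, fun n hn => propext ?_⟩
    rw [← add_assoc]
    exact hu.iff_of_no_zero_zero (hzero n hn) (hzero (n + 1) (by omega))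
  · push Not at hone
    refine ⟨d - 1, by omega, 2, fun n hn => propext ?_⟩
    obtain ⟨m, rfl⟩ := Nat.exists_eq_add_of_le' hn
    rw [show m + 2 + (d - 1) = m + 1 + d by omega]
    exact hu.iff_of_no_one_one (hone m) (hone (m + 1))

end SwapsAscents

end SwapsAscents

section Balanced

/-- The letter at position `n` of `v` has a short return at some, possibly different, position. -/
def ShortLetter (k : ℕ) (v : ℕ → α) (n : ℕ) : Prop :=
  ∃ m, ShortReturn k v m ∧ v m = v n

variable {v : ℕ → α} {k n : ℕ}

theorem ShortReturn.shortLetter (hn : ShortReturn k v n) : ShortLetter k v n :=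
  ⟨n, hn, rfl⟩

theorem shortLetter_congr {m : ℕ} (h : v m = v n) : ShortLetter k v m ↔ ShortLetter k v n := by
  rw [ShortLetter, ShortLetter, h]

variable [DecidableEq α]

theorem Balanced.exists_eq (hbal : Balanced v) {i j L : ℕ} (hij : i < j) (hj : j < i + L)
    (heq : v j = v i) (m : ℕ) : ∃ l < L, v (m + l) = v i := by
  have htwice : 2 ≤ (factorAt v i L).count (v i) := by
    rw [← List.duplicate_iff_two_le_count, List.duplicate_iff_exists_distinct_get]
    refine ⟨⟨0, by rw [length_factorAt]; omega⟩, ⟨j - i, by rw [length_factorAt]; omega⟩,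
      Fin.mk_lt_mk.2 (by omega), ?_, ?_⟩
    · rw [List.get_eq_getElem, getElem_factorAt, add_zero]
    · rw [List.get_eq_getElem, getElem_factorAt, Nat.add_sub_cancel' hij.le, heq]
  have hcounts := hbal (v i) _ _ (isFactor_factorAt v i L) (isFactor_factorAt v m L)
    (by rw [length_factorAt, length_factorAt])
  have hpos : 0 < (factorAt v m L).count (v i) := by
    have := (abs_le.1 hcounts).2
    omega
  exact mem_factorAt.1 (List.count_pos_iff.1 hpos)

theorem Balanced.return_of_shortLetter (hbal : Balanced v) (hd : DistinctWindows k v) (hk : 0 < k)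
    (hn : ShortLetter k v n) : v (n + k) = v n ∨ v (n + 1 + k) = v n := by
  obtain ⟨m, hm, hletter⟩ := hn
  obtain ⟨l, hl, heq⟩ :=
    hbal.exists_eq (i := m) (j := m + k) (L := k + 1) (by omega) (by omega) hm (n + 1)
  rw [hletter] at heq
  obtain hlt | hl' | rfl : n + 1 + l < n + k ∨ n + 1 + l = n + k ∨ l = k := by omega
  · exact absurd heq.symm (hd (by omega) hlt)
  · exact .inl (hl' ▸ heq)
  · exact .inr heq

namespace Pansiot

variable (hv : Pansiot (k + 1) v) (hbal : Balanced v) (hk : 2 ≤ k)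
include hv hbal hk

theorem not_shortLetter (h₁ : ShortReturn k v (n + 1)) : ¬ ShortLetter k v n := by
  intro hn
  rcases hbal.return_of_shortLetter hv.distinctWindows (by omega) hn with h | h
  · exact hv.not_shortReturn_succ (by omega) h h₁
  · exact hv.distinctWindows (by omega) (by omega) (h.symm.trans h₁)

variable [Fintype α] (hcard : Fintype.card α = k + 1)
include hcard

theorem ascent_shortLetter_iff : Ascent (ShortLetter k v) n ↔ ShortReturn k v (n + 1) := by
  refine ⟨fun ⟨h₀, h₁⟩ => ?_, fun h => ⟨hv.not_shortLetter hbal hk h, h.shortLetter⟩⟩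
  by_contra hS
  have hS₂ : ShortReturn k v (n + 2) :=
    hv.shortReturn_add_two hcard hk (fun h => h₀ h.shortLetter) hS
  exact hv.not_shortLetter hbal hk hS₂ h₁

theorem swapsAscents_shortLetter : SwapsAscents (k + 1) (ShortLetter k v) where
  left {n} ha := by
    have h₁ := (hv.ascent_shortLetter_iff hbal hk hcard).1 ha
    rw [show n + (k + 1) = n + 1 + k by omega, shortLetter_congr h₁]
    exact h₁.shortLetter
  right {n} ha := by
    have h₁ := (hv.ascent_shortLetter_iff hbal hk hcard).1 ha
    have hgap : v (n + 2 + k) = v n :=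
      hv.distinctWindows.apply_add_add_two hcard hk (fun h => ha.1 h.shortLetter) h₁
        (hv.not_shortReturn_succ (by omega) h₁)
    rw [show n + 1 + (k + 1) = n + 2 + k by omega, shortLetter_congr hgap]
    exact ha.1
  rest {n} h₀ h₁ := by
    rw [hv.ascent_shortLetter_iff hbal hk hcard] at h₀ h₁
    rw [show n + 1 + (k + 1) = n + 2 + k by omega]
    exact shortLetter_congr (hv.distinctWindows.apply_add_succ hcard h₀ h₁)

theorem eventuallyPeriodic_shortReturn : EventuallyPeriodic (ShortReturn k v) := by
  have hascent (n : ℕ) := hv.ascent_shortLetter_iff hbal hk hcard (n := n)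
  have hdense (n : ℕ) : Ascent (ShortLetter k v) n ∨ Ascent (ShortLetter k v) (n + 1) ∨
      Ascent (ShortLetter k v) (n + 2) := by
    rw [hascent, hascent, hascent, or_iff_not_imp_left, or_iff_not_imp_left]
    exact hv.shortReturn_add_two hcard hk
  obtain ⟨p, hp, N, hper⟩ :=
    (hv.swapsAscents_shortLetter hbal hk hcard).eventuallyPeriodic hdense (by omega)
  refine ⟨p, hp, N + 1, fun n hn => propext ?_⟩
  obtain ⟨m, rfl⟩ := Nat.exists_eq_add_of_le' (show 1 ≤ n by omega)
  rw [add_right_comm, ← hascent, ← hascent, Ascent, Ascent, add_right_comm,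
    hper m (by omega), hper (m + 1) (by omega)]

theorem eventuallyPeriodic_of_balanced : EventuallyPeriodic v :=
  (hv.eventuallyPeriodic_shortReturn hbal hk hcard).of_determined fun _ _ =>
    hv.distinctWindows.apply_add_eq_apply_add hcard

end Pansiot

theorem Balanced.not_factorExponentsLT [Fintype α] (hbal : Balanced v)
    (hcard : Fintype.card α = k + 1) (hk : 3 ≤ k) :
    ¬ FactorExponentsLT (k / (k - 1 : ℕ)) v := fun hv =>
  hv.not_eventuallyPeriodic (by omega)
    ((hv.pansiot hcard hk).eventuallyPeriodic_of_balanced hbal (by omega) hcard)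

end Balanced

theorem statement6_general [Fintype α] [DecidableEq α] (d : ℕ) (hd : 4 ≤ d)
    (hcard : Fintype.card α = d) (v : ℕ → α) (hbal : Balanced v) :
    (∃ z : List α, IsFactor v z ∧ z ≠ [] ∧
      ((d - 1 : ℕ) : ℝ≥0∞) / ((d - 2 : ℕ) : ℝ≥0∞) ≤ expE z) ∧
    ((d - 1 : ℕ) : ℝ≥0∞) / ((d - 2 : ℕ) : ℝ≥0∞) ≤ criticalExponent v ∧
    (criticalExponent v = ((d - 1 : ℕ) : ℝ≥0∞) / ((d - 2 : ℕ) : ℝ≥0∞) →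
      ∃ z : List α, IsFactor v z ∧ z ≠ [] ∧ expE z = criticalExponent v) := by
  obtain ⟨z, hz, hne, hle⟩ : ∃ z : List α, IsFactor v z ∧ z ≠ [] ∧
      ((d - 1 : ℕ) : ℝ≥0∞) / ((d - 2 : ℕ) : ℝ≥0∞) ≤ expE z := by
    have hnot := hbal.not_factorExponentsLT (k := d - 1) (by omega) (by omega)
    simpa [FactorExponentsLT, Nat.sub_sub] using hnot
  have hsup : expE z ≤ criticalExponent v := expE_le_criticalExponent hz hne
  exact ⟨⟨z, hz, hne, hle⟩, hle.trans hsup,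
    fun hE => ⟨z, hz, hne, hsup.antisymm (hE.trans_le hle)⟩⟩

theorem statement6 {α : Type*} [Fintype α] [DecidableEq α] (d : ℕ) (hd : 11 ≤ d)
    (hcard : Fintype.card α = d) (v : ℕ → α)
    (hrec : Recurrent v) (hbal : Balanced v) :
    (∃ z : List α, IsFactor v z ∧ z ≠ [] ∧
      ((d - 1 : ℕ) : ℝ≥0∞) / ((d - 2 : ℕ) : ℝ≥0∞) ≤ expE z) ∧
    ((d - 1 : ℕ) : ℝ≥0∞) / ((d - 2 : ℕ) : ℝ≥0∞) ≤ criticalExponent v ∧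
    (criticalExponent v = ((d - 1 : ℕ) : ℝ≥0∞) / ((d - 2 : ℕ) : ℝ≥0∞) →
      ∃ z : List α, IsFactor v z ∧ z ≠ [] ∧ expE z = criticalExponent v) :=
  statement6_general d (by omega) hcard v hbal

end BalancedCE
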